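/- Let 0 < a₂ ≤ 1 and b₂ ≥ 1 be real numbers. Then there exists a constant K > 0 such that for every k ≥ K the following holds: if U is of class C² on [0, k^(−1/6)] with U(0) = k^(−2/3), U′(0) = 0, and U″(x) = a₂ k U(x) / (k ∫₀ˣ U(y) dy + b₂) for all x ∈ [0, k^(−1/6)], then U′(x) ≤ 2 · log(4 k^(2/3)) for every x ∈ [0, k^(−1/6)]. -/

import Mathlib

/-!
Write `W x = ∫₀ˣ U`, `L = k^(-1/6)` and `T = k^(2/3)`. The right-hand side of the equation is the
derivative of `a₂ log (k W + b₂)`, so `U′ = a₂ log ((k W + b₂) / b₂) ≤ log (1 + k W)`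
(`deriv_le_log`). Since `U` and `U′` are nondecreasing, `W x ≤ L U x ≤ L (k^(-2/3) + L U′ x)`, and
because `k L² = T` this gives `U′ x ≤ log (T (2 + U′ x))`. As the logarithm grows sublinearly, this
self-bound forces `U′ x ≤ 2 log (4 T)` (`bound_of_le_log`). Every `k ≥ 1` is admissible.

Two-sided derivatives at the endpoints carry a possible junk value. This is harmless: the equation
makes `deriv (deriv U)` nonzero wherever `U > 0`, so `deriv U` is differentiable there, hence
continuous up to both endpoints. Positivity of `U` is therefore proved first (`solution_pos`).
-/

open Real intervalIntegral Set

/-- The equation forces `deriv U` to be differentiable wherever `U` is positive, endpoints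
included, because its derivative there is not zero. -/
lemma deriv_deriv_pos {a b k L : ℝ} {U : ℝ → ℝ} (ha : 0 < a) (hb : 0 < b) (hk : 0 < k)
    (hode : ∀ x ∈ Icc (0 : ℝ) L,
      deriv (deriv U) x = a * k * U x / (k * (∫ y in (0 : ℝ)..x, U y) + b))
    {x : ℝ} (hx : x ∈ Icc (0 : ℝ) L) (hpos : ∀ y ∈ Icc 0 x, 0 < U y) :
    DifferentiableAt ℝ (deriv U) x ∧ 0 < deriv (deriv U) x := by
  have hW : 0 ≤ ∫ y in (0 : ℝ)..x, U y :=
    intervalIntegral.integral_nonneg hx.1 fun y hy => (hpos y hy).le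
  have hU : 0 < U x := hpos x ⟨hx.1, le_rfl⟩
  have h : 0 < deriv (deriv U) x := by
    rw [hode x hx]; positivity
  exact ⟨differentiableAt_of_deriv_ne_zero h.ne', h⟩

/-- At a first zero `z` of `U`, `deriv U` would be strictly increasing from `0` on `[0, z)`, hence
nonnegative, so `U z ≥ U 0 > 0`. -/
lemma solution_pos {a b k L : ℝ} {U : ℝ → ℝ} (ha : 0 < a) (hb : 0 < b) (hk : 0 < k)
    (hc : ContinuousOn U (Icc 0 L)) (hU0 : 0 < U 0) (hV0 : deriv U 0 = 0)
    (hode : ∀ x ∈ Icc (0 : ℝ) L,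
      deriv (deriv U) x = a * k * U x / (k * (∫ y in (0 : ℝ)..x, U y) + b)) :
    ∀ x ∈ Icc 0 L, 0 < U x := by
  by_contra! hcon
  obtain ⟨x₁, hx₁, hUx₁⟩ := hcon
  have hcomp : IsCompact (Icc 0 L ∩ U ⁻¹' Iic 0) :=
    isCompact_Icc.of_isClosed_subset (hc.preimage_isClosed_of_isClosed isClosed_Icc isClosed_Iic)
      inter_subset_left
  obtain ⟨z, ⟨hz, hUz⟩, hleast⟩ := hcomp.exists_isLeast ⟨x₁, hx₁, hUx₁⟩
  have hpos : ∀ y ∈ Ico 0 z, 0 < U y := by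
    intro y hy
    by_contra! h
    exact absurd (hleast ⟨⟨hy.1, hy.2.le.trans hz.2⟩, h⟩) (not_le.2 hy.2)
  have hV : ∀ x ∈ Ico 0 z, DifferentiableAt ℝ (deriv U) x ∧ 0 < deriv (deriv U) x :=
    fun x hx => deriv_deriv_pos ha hb hk hode ⟨hx.1, hx.2.le.trans hz.2⟩
      fun y hy => hpos y ⟨hy.1, hy.2.trans_lt hx.2⟩
  -- Strict positivity also yields differentiability of `U`, since `deriv U x` is then not a junk
  -- value; only continuity of `U` is assumed here.
  have hVpos : ∀ x ∈ Ioo 0 z, 0 < deriv U x := by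
    intro x hx
    have hs : StrictMonoOn (deriv U) (Ico 0 z) :=
      strictMonoOn_of_deriv_pos (convex_Ico 0 z)
        (fun x hx => (hV x hx).1.continuousAt.continuousWithinAt)
        (fun x hx => (hV x (interior_subset hx)).2)
    have := hs ⟨le_rfl, hx.1.trans hx.2⟩ ⟨hx.1.le, hx.2⟩ hx.1
    rwa [hV0] at this
  have hUmono : MonotoneOn U (Icc 0 z) := by
    refine monotoneOn_of_deriv_nonneg (convex_Icc 0 z) (hc.mono (Icc_subset_Icc_right hz.2)) ?_ ?_
    all_goals rw [interior_Icc]; intro x hx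
    · exact (differentiableAt_of_deriv_ne_zero (hVpos x hx).ne').differentiableWithinAt
    · exact (hVpos x hx).le
  have := hUmono ⟨le_rfl, hz.1⟩ ⟨hz.1, le_rfl⟩ hz.1
  have hUz' : U z ≤ 0 := hUz
  linarith

/-- The first integral of the equation: with `W x = ∫₀ˣ U`, the derivative of
`deriv U - a log (k W + b)` vanishes, and its value at `0` is `-a log b`. -/
lemma deriv_le_log {a b k L : ℝ} {U : ℝ → ℝ} (hb : 0 < b) (hk : 0 < k)
    (hc : ContinuousOn U (Icc 0 L)) (hV0 : deriv U 0 = 0) (hpos : ∀ x ∈ Icc 0 L, 0 < U x)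
    (hV : ∀ x ∈ Icc 0 L, DifferentiableAt ℝ (deriv U) x)
    (hode : ∀ x ∈ Icc (0 : ℝ) L,
      deriv (deriv U) x = a * k * U x / (k * (∫ y in (0 : ℝ)..x, U y) + b))
    {x : ℝ} (hx : x ∈ Icc 0 L) :
    deriv U x ≤ a * (log (k * (∫ y in (0 : ℝ)..x, U y) + b) - log b) := by
  have hL : 0 ≤ L := hx.1.trans hx.2
  have hden : ∀ t ∈ Icc 0 L, 0 < k * (∫ y in (0 : ℝ)..t, U y) + b := by
    intro t ht
    have : 0 ≤ ∫ y in (0 : ℝ)..t, U y :=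
      intervalIntegral.integral_nonneg ht.1 fun y hy => (hpos y ⟨hy.1, hy.2.trans ht.2⟩).le
    positivity
  have hWc : ContinuousOn (fun t => ∫ y in (0 : ℝ)..t, U y) (Icc 0 L) := by
    have h := intervalIntegral.continuousOn_primitive_interval (μ := MeasureTheory.volume)
      (f := U) (a := 0) (b := L) (by
        rw [uIcc_of_le hL]; exact hc.integrableOn_Icc)
    rwa [uIcc_of_le hL] at h
  have hd : ∀ t ∈ Ioo 0 L, HasDerivAt
      (fun t => deriv U t - a * log (k * (∫ y in (0 : ℝ)..t, U y) + b)) 0 t := by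
    intro t ht
    have ht' := Ioo_subset_Icc_self ht
    have hcO : ContinuousOn U (Ioo 0 L) := hc.mono Ioo_subset_Icc_self
    have hW : HasDerivAt (fun t => ∫ y in (0 : ℝ)..t, U y) (U t) t :=
      intervalIntegral.integral_hasDerivAt_right
        ((hc.mono (Icc_subset_Icc_right ht.2.le)).intervalIntegrable_of_Icc ht.1.le)
        (hcO.stronglyMeasurableAtFilter isOpen_Ioo t ht)
        (hcO.continuousAt (isOpen_Ioo.mem_nhds ht))
    have h := (hV t ht').hasDerivAt.sub
      ((((hW.const_mul k).add_const b).log (hden t ht').ne').const_mul a)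
    have h0 : deriv (deriv U) t - a * (k * U t / (k * (∫ y in (0 : ℝ)..t, U y) + b)) = 0 := by
      rw [hode t ht']; ring
    rw [h0] at h
    exact h
  have hanti : AntitoneOn (fun t => deriv U t - a * log (k * (∫ y in (0 : ℝ)..t, U y) + b))
      (Icc 0 L) := by
    refine antitoneOn_of_deriv_nonpos (convex_Icc 0 L) ?_ ?_ ?_
    · refine ContinuousOn.sub (fun t ht => (hV t ht).continuousAt.continuousWithinAt) ?_
      exact continuousOn_const.mul
        (((continuousOn_const.mul hWc).add continuousOn_const).log fun t ht => (hden t ht).ne')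
    · rw [interior_Icc]; exact fun t ht => (hd t ht).differentiableAt.differentiableWithinAt
    · rw [interior_Icc]; exact fun t ht => (hd t ht).deriv.le
  have h := hanti ⟨le_rfl, hL⟩ hx hx.1
  simp only [intervalIntegral.integral_same, mul_zero, zero_add, hV0] at h
  linarith

/-- The tangent line of `log` at `1`, applied to `(2 + M) / 4`, absorbs `M / 4` into the left-hand
side and even gives the constant `4 / 3` in place of `2`. -/
lemma bound_of_le_log {M T : ℝ} (hM : 0 ≤ M) (hT : 1 ≤ T) (h : M ≤ log (T * (2 + M))) :
    M ≤ 2 * log (4 * T) := by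
  have h4 : T * (2 + M) = (4 * T) * ((2 + M) / 4) := by ring
  rw [h4, log_mul (by positivity) (by positivity)] at h
  have h1 : log ((2 + M) / 4) ≤ (2 + M) / 4 - 1 := log_le_sub_one_of_pos (by positivity)
  have h2 : 0 ≤ log (4 * T) := log_nonneg (by linarith)
  linarith

/-- for `0 < a₂ ≤ 1`, `b₂ ≥ 1`, there is `K > 0` such that for every
`k ≥ K`: if `U` is `C²` on `[0, k^(-1/6)]` with `U(0) = k^(-2/3)`, `U′(0) = 0` and
`U″(x) = a₂ k U(x) / (k ∫₀ˣ U + b₂)` there, then `U′(x) ≤ 2 log(4 k^(2/3))` on the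
interval. -/
theorem stmt8 (a₂ b₂ : ℝ) (ha₂ : 0 < a₂) (ha₂' : a₂ ≤ 1) (hb₂ : 1 ≤ b₂) :
    ∃ K : ℝ, 0 < K ∧ ∀ k : ℝ, K ≤ k →
      ∀ U : ℝ → ℝ,
        ContDiffOn ℝ 2 U (Set.Icc 0 (k ^ (-(1 : ℝ)/6))) →
        U 0 = k ^ (-(2 : ℝ)/3) →
        deriv U 0 = 0 →
        (∀ x ∈ Set.Icc (0 : ℝ) (k ^ (-(1 : ℝ)/6)),
          deriv (deriv U) x = a₂ * k * U x / (k * (∫ y in (0 : ℝ)..x, U y) + b₂)) →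
        ∀ x ∈ Set.Icc (0 : ℝ) (k ^ (-(1 : ℝ)/6)),
          deriv U x ≤ 2 * Real.log (4 * k ^ ((2 : ℝ)/3)) := by
  refine ⟨1, one_pos, fun k hk U hU hU0 hV0 hode x hx => ?_⟩
  have hk0 : 0 < k := by linarith
  have hb0 : 0 < b₂ := by linarith
  -- The powers of `k` enter only through these three relations and positivity.
  have hT : 1 ≤ k ^ ((2 : ℝ)/3) := one_le_rpow hk (by norm_num)
  have hkLL : k * (k ^ (-(1 : ℝ)/6) * k ^ (-(1 : ℝ)/6)) = k ^ ((2 : ℝ)/3) := by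
    rw [← rpow_add hk0, ← rpow_one_add' hk0.le (by norm_num)]
    norm_num
  have hkLU : k * (k ^ (-(1 : ℝ)/6) * k ^ (-(2 : ℝ)/3)) ≤ k ^ ((2 : ℝ)/3) := by
    rw [← rpow_add hk0, ← rpow_one_add' hk0.le (by norm_num)]
    exact rpow_le_rpow_of_exponent_le hk (by norm_num)
  have hU0pos : 0 < U 0 := by rw [hU0]; positivity
  rw [← hU0] at hkLU
  have hL0 : 0 < k ^ (-(1 : ℝ)/6) := by positivity
  generalize k ^ (-(1 : ℝ)/6) = L at *
  generalize k ^ ((2 : ℝ)/3) = T at *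
  have hc : ContinuousOn U (Icc 0 L) := hU.continuousOn
  have hpos := solution_pos ha₂ hb0 hk0 hc hU0pos hV0 hode
  have hV : ∀ t ∈ Icc 0 L, DifferentiableAt ℝ (deriv U) t ∧ 0 < deriv (deriv U) t :=
    fun t ht => deriv_deriv_pos ha₂ hb0 hk0 hode ht fun y hy => hpos y ⟨hy.1, hy.2.trans ht.2⟩
  have hVmono : MonotoneOn (deriv U) (Icc 0 L) :=
    monotoneOn_of_deriv_nonneg (convex_Icc 0 L)
      (fun t ht => (hV t ht).1.continuousAt.continuousWithinAt)
      (fun t ht => (hV t (interior_subset ht)).1.differentiableWithinAt)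
      (fun t ht => (hV t (interior_subset ht)).2.le)
  have hVnn : ∀ t ∈ Icc 0 L, 0 ≤ deriv U t := fun t ht =>
    hV0 ▸ hVmono ⟨le_rfl, hL0.le⟩ ht ht.1
  have hdU : DifferentiableOn ℝ U (interior (Icc 0 L)) :=
    (hU.differentiableOn (by norm_num)).mono interior_subset
  have hUmono : MonotoneOn U (Icc 0 L) :=
    monotoneOn_of_deriv_nonneg (convex_Icc 0 L) hc hdU
      fun t ht => hVnn t (interior_subset ht)
  have hsub : Icc 0 x ⊆ Icc 0 L := Icc_subset_Icc_right hx.2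
  have hUx : U x - U 0 ≤ deriv U x * (x - 0) :=
    (convex_Icc 0 x).image_sub_le_mul_sub_of_deriv_le (hc.mono hsub)
      (hdU.mono (interior_mono hsub))
      (fun t ht => hVmono (hsub (interior_subset ht)) hx (interior_subset ht).2)
      0 ⟨le_rfl, hx.1⟩ x ⟨hx.1, le_rfl⟩ hx.1
  have hW0 : 0 ≤ ∫ y in (0 : ℝ)..x, U y :=
    intervalIntegral.integral_nonneg hx.1 fun y hy => (hpos y (hsub hy)).le
  have hWx : (∫ y in (0 : ℝ)..x, U y) ≤ x * U x := by
    have h := intervalIntegral.integral_mono_on hx.1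
      ((hc.mono hsub).intervalIntegrable_of_Icc hx.1)
      (intervalIntegrable_const (c := U x) (μ := MeasureTheory.volume))
      fun y hy => hUmono (hsub hy) hx hy.2
    simpa using h
  have hlog := deriv_le_log hb0 hk0 hc hV0 hpos (fun t ht => (hV t ht).1) hode hx
  have hM := hVnn x hx
  generalize (∫ y in (0 : ℝ)..x, U y) = W at *
  generalize deriv U x = M at *
  refine bound_of_le_log hM hT ?_
  have hWb : W ≤ L * (U 0 + L * M) := by
    have h1 : U x ≤ U 0 + L * M := by nlinarith [mul_le_mul_of_nonneg_right hx.2 hM]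
    exact hWx.trans (mul_le_mul hx.2 h1 (hpos x hx).le hL0.le)
  have harg : 1 + k * W ≤ T * (2 + M) := by
    have h1 := mul_le_mul_of_nonneg_left hWb hk0.le
    have h2 : k * (L * (U 0 + L * M)) = k * (L * U 0) + k * (L * L) * M := by ring
    rw [hkLL] at h2
    linarith
  have hdiff : log (k * W + b₂) - log b₂ = log ((k * W + b₂) / b₂) :=
    (log_div (by positivity) hb0.ne').symm
  have hq1 : 1 ≤ (k * W + b₂) / b₂ := by
    rw [le_div_iff₀ hb0]; nlinarith [mul_nonneg hk0.le hW0]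
  have hq2 : (k * W + b₂) / b₂ ≤ 1 + k * W := by
    rw [div_le_iff₀ hb0]; nlinarith [mul_nonneg hk0.le hW0]
  rw [hdiff] at hlog
  calc M ≤ a₂ * log ((k * W + b₂) / b₂) := hlog
    _ ≤ log ((k * W + b₂) / b₂) := mul_le_of_le_one_left (log_nonneg hq1) ha₂'
    _ ≤ log (T * (2 + M)) := log_le_log (by linarith) (hq2.trans harg)
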